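/- Let B ⊂ ℝ³ be the open unit ball, let ρ0:[0,1]→[0,∞) be measurable and bounded, and let r:(0,1]→(0,∞) be measurable and nondecreasing. Define the radial deformation u(x) = r(‖x‖) x/‖x‖ for x ∈ B∖{0}. Then (1/2) ∫_B ∫_B ρ0(‖x‖) ρ0(‖y‖) / ‖u(x) − u(y)‖ dy dx = 4π ∫₀¹ ρ0(R) M_R r(R)⁻¹ R² dR, with equality in [0,∞]. -/

import Mathlib

open MeasureTheory Real Set Filter
open scoped ENNReal

/-- `M_R = 4π ∫₀^R ρ0(u) u² du`. -/
noncomputable def Mfun (ρ0 : ℝ → ℝ) (R : ℝ) : ℝ := 4 * π * ∫ u in (0:ℝ)..R, ρ0 u * u ^ 2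

/-!
By Archimedes' hat-box theorem, `⟪ω, e⟫` is uniformly distributed on `[-1, 1]` when `ω` is uniform
on the unit sphere of a three-dimensional space and `e` is a unit vector. Hence the average of
`1 / ‖p - b ω‖` over the sphere is `1 / max ‖p‖ b` (Newton's shell theorem), and the deformed shells
of radii `R` and `S` interact with energy proportional to `1 / max (r R) (r S)`. This kernel is
symmetric, so the factor `1 / 2` reduces the double integral to `S < R`, where monotonicity of `r`
turns the maximum into `r R` and the integral over `S` into the mass `M_R`.
-/

open Metric Module

section Polar

variable {E : Type*} [NormedAddCommGroup E] [NormedSpace ℝ E] [FiniteDimensional ℝ E]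
  [Nontrivial E] [MeasurableSpace E] [BorelSpace E]

theorem lintegral_fun_norm_addHaar (μ : Measure E) [μ.IsAddHaarMeasure] {f : ℝ → ℝ≥0∞}
    (hf : Measurable f) :
    ∫⁻ x, f ‖x‖ ∂μ = finrank ℝ E * μ (ball 0 1) *
      ∫⁻ s in Ioi (0 : ℝ), ENNReal.ofReal (s ^ (finrank ℝ E - 1)) * f s := by
  have hf' : Measurable fun s : Ioi (0 : ℝ) ↦ f s := hf.comp measurable_subtype_coe
  calc
    ∫⁻ x, f ‖x‖ ∂μ = ∫⁻ x : ({0}ᶜ : Set E), f ‖x.1‖ ∂μ.comap (↑) := by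
      rw [lintegral_subtype_comap (measurableSet_singleton 0).compl fun x ↦ f ‖x‖,
        restrict_compl_singleton]
    _ = ∫⁻ x, f x.2 ∂μ.toSphere.prod (.volumeIoiPow (finrank ℝ E - 1)) := by
      simpa using μ.measurePreserving_homeomorphUnitSphereProd.lintegral_comp
        (hf'.comp measurable_snd)
    _ = μ.toSphere univ * ∫⁻ s : Ioi (0 : ℝ), f s ∂.volumeIoiPow (finrank ℝ E - 1) := by
      rw [lintegral_prod (fun x : sphere (0 : E) 1 × Ioi (0 : ℝ) ↦ f x.2)
        (hf'.comp measurable_snd).aemeasurable]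
      simp only [lintegral_const, mul_comm]
    _ = _ := by
      rw [μ.toSphere_apply_univ, Measure.volumeIoiPow,
        lintegral_withDensity_eq_lintegral_mul _ (by fun_prop) hf',
        ← lintegral_subtype_comap measurableSet_Ioi]
      rfl

end Polar

section Slices

variable {E : Type*} [NormedAddCommGroup E] [InnerProductSpace ℝ E] [FiniteDimensional ℝ E]
  [MeasurableSpace E] [BorelSpace E]

theorem measurePreserving_smul_add_orthogonal {e : E} (he : ‖e‖ = 1) :
    MeasurePreserving fun q : ℝ × (ℝ ∙ e)ᗮ ↦ q.1 • e + q.2 := by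
  have line := (LinearIsometryEquiv.toSpanUnitSingleton e he).measurePreserving
  have split := (ℝ ∙ e).orthogonalDecomposition.symm.measurePreserving.comp
    (WithLp.volume_preserving_toLp (ℝ ∙ e) (ℝ ∙ e)ᗮ)
  convert! split.comp (line.prod (.id volume)) using 2 with q

theorem lintegral_fun_norm_inner_eq_lintegral_lintegral_orthogonal {f : ℝ → ℝ → ℝ≥0∞}
    (hf : Measurable (Function.uncurry f)) {e : E} (he : ‖e‖ = 1) :
    ∫⁻ y : E, f ‖y‖ (inner ℝ e y) = ∫⁻ z : ℝ, ∫⁻ w : (ℝ ∙ e)ᗮ, f √(z ^ 2 + ‖w‖ ^ 2) z := by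
  have horth (w : (ℝ ∙ e)ᗮ) : inner ℝ e (w : E) = 0 :=
    Submodule.mem_orthogonal_singleton_iff_inner_right.1 w.2
  have hnorm (z : ℝ) (w : (ℝ ∙ e)ᗮ) : ‖z • e + (w : E)‖ = √(z ^ 2 + ‖w‖ ^ 2) := by
    rw [← sqrt_sq (norm_nonneg (z • e + (w : E))), norm_add_sq_real, real_inner_smul_left, horth]
    simp [norm_smul, he]
  have hinner (z : ℝ) (w : (ℝ ∙ e)ᗮ) : inner ℝ e (z • e + (w : E)) = z := by
    simp [inner_add_right, inner_smul_right, he, horth]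
  have hfE : Measurable fun y : E ↦ f ‖y‖ (inner ℝ e y) :=
    hf.comp (f := fun y : E ↦ (‖y‖, inner ℝ e y)) (by fun_prop)
  have hΦ := measurePreserving_smul_add_orthogonal he
  calc
    ∫⁻ y : E, f ‖y‖ (inner ℝ e y)
      = ∫⁻ q : ℝ × (ℝ ∙ e)ᗮ, f ‖q.1 • e + (q.2 : E)‖ (inner ℝ e (q.1 • e + (q.2 : E))) :=
        (hΦ.lintegral_comp hfE).symm
    _ = ∫⁻ z : ℝ, ∫⁻ w : (ℝ ∙ e)ᗮ, f ‖z • e + (w : E)‖ (inner ℝ e (z • e + (w : E))) :=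
        lintegral_prod _ (hfE.comp hΦ.measurable).aemeasurable
    _ = ∫⁻ z : ℝ, ∫⁻ w : (ℝ ∙ e)ᗮ, f √(z ^ 2 + ‖w‖ ^ 2) z := by simp only [hnorm, hinner]

end Slices

section RealLine

theorem image_sqrt_sq_add_sq_Ioi (z : ℝ) : (fun s ↦ √(z ^ 2 + s ^ 2)) '' Ioi 0 = Ioi |z| := by
  ext R
  constructor
  · rintro ⟨s, hs : 0 < s, rfl⟩
    exact lt_sqrt_of_sq_lt (by rw [sq_abs]; exact lt_add_of_pos_right _ (by positivity))
  · intro hR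
    have hlt : z ^ 2 < R ^ 2 := sq_lt_sq.2 (hR.trans_le (le_abs_self R))
    refine ⟨√(R ^ 2 - z ^ 2), sqrt_pos.2 (sub_pos.2 hlt), ?_⟩
    simp only [sq_sqrt (sub_pos.2 hlt).le, add_sub_cancel, sqrt_sq ((abs_nonneg z).trans hR.le)]

theorem lintegral_Ioi_mul_comp_sqrt_sq_add_sq (g : ℝ → ℝ≥0∞) (z : ℝ) :
    ∫⁻ s in Ioi 0, ENNReal.ofReal s * g √(z ^ 2 + s ^ 2) =
      ∫⁻ R in Ioi |z|, ENNReal.ofReal R * g R := by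
  have hpos {s : ℝ} (hs : s ∈ Ioi 0) : 0 < z ^ 2 + s ^ 2 :=
    add_pos_of_nonneg_of_pos (sq_nonneg z) (pow_pos hs 2)
  have hderiv (s : ℝ) (hs : s ∈ Ioi 0) :
      HasDerivWithinAt (fun s ↦ √(z ^ 2 + s ^ 2)) (s / √(z ^ 2 + s ^ 2)) (Ioi 0) s := by
    refine ((((hasDerivAt_pow 2 s).const_add (z ^ 2)).sqrt (hpos hs).ne').congr_deriv ?_)
      |>.hasDerivWithinAt
    field_simp
    norm_num
  have hinj : InjOn (fun s ↦ √(z ^ 2 + s ^ 2)) (Ioi 0) := fun s hs t ht hst ↦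
    (sq_eq_sq₀ (le_of_lt hs) (le_of_lt ht)).1
      (add_left_cancel ((sqrt_inj (hpos hs).le (hpos ht).le).1 hst))
  rw [← image_sqrt_sq_add_sq_Ioi,
    lintegral_image_eq_lintegral_abs_deriv_mul measurableSet_Ioi hderiv hinj]
  refine setLIntegral_congr_fun measurableSet_Ioi fun s hs ↦ ?_
  have hsqrt : 0 < √(z ^ 2 + s ^ 2) := sqrt_pos.2 (hpos hs)
  rw [abs_of_pos (div_pos hs hsqrt), ← mul_assoc, ← ENNReal.ofReal_mul (div_pos hs hsqrt).le,
    div_mul_cancel₀ s hsqrt.ne']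

theorem setLIntegral_Ioo_neg_self (g : ℝ → ℝ≥0∞) {R : ℝ} (hR : 0 < R) :
    ∫⁻ z in Ioo (-R) R, g z = ENNReal.ofReal R * ∫⁻ t in Ioo (-1) 1, g (R * t) := by
  have himage : (R * ·) '' Ioo (-1) 1 = Ioo (-R) R := by
    rw [image_mul_left_Ioo hR, mul_neg_one, mul_one]
  have hderiv (t : ℝ) : HasDerivAt (R * ·) R t := by
    simpa using (hasDerivAt_id t).const_mul R
  rw [← himage, lintegral_image_eq_lintegral_abs_deriv_mul measurableSet_Ioo
    (fun t _ ↦ (hderiv t).hasDerivWithinAt) (mul_right_injective₀ hR.ne').injOn, abs_of_pos hR]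
  exact lintegral_const_mul' _ _ ENNReal.ofReal_ne_top

theorem lintegral_lintegral_Ioi_abs_swap {h : ℝ → ℝ → ℝ≥0∞}
    (hh : Measurable (Function.uncurry h)) :
    ∫⁻ z, ∫⁻ R in Ioi |z|, h z R = ∫⁻ R in Ioi 0, ∫⁻ z in Ioo (-R) R, h z R := by
  let cone : Set (ℝ × ℝ) := {q | |q.1| < q.2}
  have hcone : MeasurableSet cone := measurableSet_lt (by fun_prop) measurable_snd
  calc
    ∫⁻ z, ∫⁻ R in Ioi |z|, h z R = ∫⁻ z, ∫⁻ R, cone.indicator (Function.uncurry h) (z, R) :=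
      lintegral_congr fun z ↦ (lintegral_indicator measurableSet_Ioi _).symm
    _ = ∫⁻ R, ∫⁻ z, cone.indicator (Function.uncurry h) (z, R) :=
      lintegral_lintegral_swap (hh.indicator hcone).aemeasurable
    _ = ∫⁻ R in Ioi 0, ∫⁻ z, cone.indicator (Function.uncurry h) (z, R) := by
      refine (setLIntegral_eq_of_support_subset (Function.support_subset_iff'.2 fun R hR ↦ ?_)).symm
      have hout (z : ℝ) : (z, R) ∉ cone := fun hz ↦ hR ((abs_nonneg z).trans_lt hz)
      simp only [indicator_of_notMem (hout _), lintegral_zero]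
    _ = ∫⁻ R in Ioi 0, ∫⁻ z in Ioo (-R) R, h z R := by
      refine lintegral_congr fun R ↦ ?_
      rw [← lintegral_indicator measurableSet_Ioo]
      refine lintegral_congr fun z ↦ ?_
      simp only [indicator, cone, mem_ofPred_eq, mem_Ioo, abs_lt, Function.uncurry_apply_pair]

theorem setLIntegral_deriv_of_nonneg {g g' : ℝ → ℝ} {a b : ℝ} (hab : a ≤ b)
    (hcont : ContinuousOn g (Icc a b)) (hderiv : ∀ x ∈ Ioo a b, HasDerivAt g (g' x) x)
    (hpos : ∀ x ∈ Ioo a b, 0 ≤ g' x) :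
    ∫⁻ x in Ioo a b, ENNReal.ofReal (g' x) = ENNReal.ofReal (g b - g a) := by
  have hint : IntegrableOn g' (Ioc a b) :=
    intervalIntegral.integrableOn_deriv_of_nonneg hcont hderiv hpos
  rw [← intervalIntegral.integral_eq_sub_of_hasDerivAt_of_le hab hcont hderiv
      ((intervalIntegrable_iff_integrableOn_Ioc_of_le hab).2 hint),
    intervalIntegral.integral_of_le hab, integral_Ioc_eq_integral_Ioo,
    ofReal_integral_eq_lintegral_ofReal (hint.mono_set Ioo_subset_Ioc_self)]
  exact ae_restrict_of_forall_mem measurableSet_Ioo hpos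

theorem lintegral_inv_sqrt_sq_add_sq_sub {a b : ℝ} (ha : 0 ≤ a) (hb : 0 < b) :
    ∫⁻ t in Ioo (-1) 1, ENNReal.ofReal (√(a ^ 2 + b ^ 2 - 2 * a * b * t))⁻¹ =
      ENNReal.ofReal (2 / max a b) := by
  rcases ha.eq_or_lt with rfl | ha
  · rw [max_eq_right hb.le, div_eq_inv_mul, ENNReal.ofReal_mul (by positivity)]
    norm_num [sqrt_sq hb.le]
  have hpos (t : ℝ) (ht : t ∈ Ioo (-1) 1) : 0 < a ^ 2 + b ^ 2 - 2 * a * b * t := by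
    nlinarith [sq_nonneg (a - b), mul_pos (mul_pos ha hb) (sub_pos.2 ht.2)]
  have hderiv (t : ℝ) (ht : t ∈ Ioo (-1) 1) :
      HasDerivAt (fun t ↦ -(√(a ^ 2 + b ^ 2 - 2 * a * b * t) / (a * b)))
        (√(a ^ 2 + b ^ 2 - 2 * a * b * t))⁻¹ t := by
    have hquad : HasDerivAt (fun t ↦ a ^ 2 + b ^ 2 - 2 * a * b * t) (-(2 * a * b)) t := by
      simpa using ((hasDerivAt_id t).const_mul (2 * a * b)).const_sub (a ^ 2 + b ^ 2)
    refine ((hquad.sqrt (hpos t ht).ne').div_const (a * b)).neg.congr_deriv ?_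
    field_simp
  rw [setLIntegral_deriv_of_nonneg (by norm_num) (by fun_prop) hderiv fun t _ ↦ by positivity]
  have hnear : a ^ 2 + b ^ 2 - 2 * a * b * 1 = (a - b) ^ 2 := by ring
  have hfar : a ^ 2 + b ^ 2 - 2 * a * b * -1 = (a + b) ^ 2 := by ring
  rw [hnear, hfar, sqrt_sq_eq_abs, sqrt_sq (by positivity)]
  congr 1
  rcases le_total a b with hab | hab
  · rw [max_eq_right hab, abs_of_nonpos (sub_nonpos.2 hab)]
    field_simp
    ring
  · rw [max_eq_left hab, abs_of_nonneg (sub_nonneg.2 hab)]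
    field_simp
    ring

theorem intervalIntegrable_of_mem_Icc {f : ℝ → ℝ} {μ : Measure ℝ} [IsLocallyFiniteMeasure μ]
    {a b m M : ℝ} (hf : AEMeasurable f μ) (h : ∀ x ∈ uIcc a b, f x ∈ Icc m M) :
    IntervalIntegrable f μ a b := by
  have : IsFiniteMeasure (μ.restrict (uIoc a b)) := ⟨by
    simpa using (measure_mono uIoc_subset_uIcc).trans_lt isCompact_uIcc.measure_lt_top⟩
  exact intervalIntegrable_iff.2 (.of_mem_Icc m M hf.restrict
    (ae_restrict_of_forall_mem measurableSet_uIoc fun x hx ↦ h x (uIoc_subset_uIcc hx)))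

end RealLine

section Symmetrization

variable {α : Type*} [TopologicalSpace α] [LinearOrder α] [OrderClosedTopology α]
  [SecondCountableTopology α] [MeasurableSpace α] [OpensMeasurableSpace α]

theorem lintegral_lintegral_eq_two_mul_of_symm {μ : Measure α} [SFinite μ] [NullSingletonClass μ]
    {K : α → α → ℝ≥0∞} (hK : Measurable (Function.uncurry K)) (hsymm : ∀ a b, K a b = K b a) :
    ∫⁻ a, ∫⁻ b, K a b ∂μ ∂μ = 2 * ∫⁻ a, ∫⁻ b in Iio a, K a b ∂μ ∂μ := by
  let lower : α × α → ℝ≥0∞ := {q | q.2 < q.1}.indicator (Function.uncurry K)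
  have hlower : Measurable lower := hK.indicator (measurableSet_lt measurable_snd measurable_fst)
  have hIio (a : α) : ∫⁻ b in Iio a, K a b ∂μ = ∫⁻ b, lower (a, b) ∂μ :=
    (lintegral_indicator measurableSet_Iio _).symm
  have hIci (a : α) : ∫⁻ b in (Iio a)ᶜ, K a b ∂μ = ∫⁻ b, lower (b, a) ∂μ := by
    rw [compl_Iio, ← restrict_Ioi_eq_restrict_Ici, ← lintegral_indicator measurableSet_Ioi]
    simp only [lower, indicator, mem_Ioi, mem_ofPred_eq, Function.uncurry_apply_pair, hsymm _ a]
  have hsplit (a : α) : ∫⁻ b, K a b ∂μ = ∫⁻ b, lower (a, b) ∂μ + ∫⁻ b, lower (b, a) ∂μ := by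
    rw [← lintegral_add_compl _ measurableSet_Iio, hIio, hIci a]
  simp only [hsplit, hIio]
  rw [lintegral_add_left hlower.lintegral_prod_right',
    lintegral_lintegral_swap (f := fun a b ↦ lower (b, a))
      (hlower.comp measurable_swap).aemeasurable, two_mul]

end Symmetrization

section Spherical

variable {E : Type*} [NormedAddCommGroup E] [InnerProductSpace ℝ E] [MeasurableSpace E]
  [BorelSpace E]

theorem lintegral_fun_norm_of_finrank_eq_two [FiniteDimensional ℝ E] (hE : finrank ℝ E = 2)
    {f : ℝ → ℝ≥0∞} (hf : Measurable f) :
    ∫⁻ w : E, f ‖w‖ = ENNReal.ofReal (2 * π) * ∫⁻ s in Ioi 0, ENNReal.ofReal s * f s := by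
  have : Nontrivial E := nontrivial_of_finrank_pos (R := ℝ) (by lia)
  rw [lintegral_fun_norm_addHaar volume hf,
    InnerProductSpace.volume_ball_of_dim_even (k := 1) (by lia), hE]
  simp [ENNReal.ofReal_mul]

variable [FiniteDimensional ℝ E] [Fact (finrank ℝ E = 3)]

-- Archimedes' hat-box theorem: the measure `s ds dz` of cylindrical coordinates around `e` is
-- `R dR dz`, so the height `z` is uniformly distributed on each sphere.
theorem lintegral_fun_norm_inner_of_norm_eq_one {f : ℝ → ℝ → ℝ≥0∞}
    (hf : Measurable (Function.uncurry f)) {e : E} (he : ‖e‖ = 1) :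
    ∫⁻ y : E, f ‖y‖ (inner ℝ e y) = ENNReal.ofReal (2 * π) *
      ∫⁻ R in Ioi 0, ENNReal.ofReal (R ^ 2) * ∫⁻ t in Ioo (-1) 1, f R (R * t) := by
  have : Fact (finrank ℝ E = 2 + 1) := ‹_›
  have hplane : finrank ℝ (ℝ ∙ e)ᗮ = 2 :=
    Submodule.finrank_orthogonal_span_singleton (norm_ne_zero_iff.1 (he ▸ one_ne_zero))
  have hslice (z : ℝ) : ∫⁻ w : (ℝ ∙ e)ᗮ, f √(z ^ 2 + ‖w‖ ^ 2) z =
      ENNReal.ofReal (2 * π) * ∫⁻ R in Ioi |z|, ENNReal.ofReal R * f R z := by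
    rw [lintegral_fun_norm_of_finrank_eq_two hplane (f := fun s ↦ f √(z ^ 2 + s ^ 2) z)
      (hf.comp (f := fun s ↦ (√(z ^ 2 + s ^ 2), z)) (by fun_prop)),
      lintegral_Ioi_mul_comp_sqrt_sq_add_sq (f · z)]
  have hweighted : Measurable (Function.uncurry fun z R ↦ ENNReal.ofReal R * f R z) :=
    (ENNReal.measurable_ofReal.comp measurable_snd).mul (hf.comp measurable_swap)
  rw [lintegral_fun_norm_inner_eq_lintegral_lintegral_orthogonal hf he, lintegral_congr hslice,
    lintegral_const_mul' _ _ ENNReal.ofReal_ne_top, lintegral_lintegral_Ioi_abs_swap hweighted]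
  congr 1
  refine setLIntegral_congr_fun measurableSet_Ioi fun R (hR : 0 < R) ↦ ?_
  rw [lintegral_const_mul' _ _ ENNReal.ofReal_ne_top, setLIntegral_Ioo_neg_self _ hR, sq,
    ENNReal.ofReal_mul hR.le, mul_assoc]

theorem lintegral_fun_norm_inner {f : ℝ → ℝ → ℝ≥0∞} (hf : Measurable (Function.uncurry f))
    (p : E) :
    ∫⁻ y : E, f ‖y‖ (inner ℝ p y) = ENNReal.ofReal (2 * π) *
      ∫⁻ R in Ioi 0, ENNReal.ofReal (R ^ 2) * ∫⁻ t in Ioo (-1) 1, f R (‖p‖ * (R * t)) := by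
  obtain ⟨e, he, hpe⟩ : ∃ e : E, ‖e‖ = 1 ∧ ‖p‖ • e = p := by
    rcases eq_or_ne p 0 with rfl | hp
    · have : Nontrivial E := nontrivial_of_finrank_eq_succ (Fact.out : finrank ℝ E = 2 + 1)
      obtain ⟨e, he⟩ := exists_norm_eq E zero_le_one
      exact ⟨e, he, by simp⟩
    · exact ⟨‖p‖⁻¹ • p, norm_smul_inv_norm hp, smul_inv_smul₀ (norm_ne_zero_iff.2 hp) p⟩
  have hinner (y : E) : inner ℝ p y = ‖p‖ * inner ℝ e y := by
    rw [← real_inner_smul_left, hpe]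
  simp only [hinner]
  exact lintegral_fun_norm_inner_of_norm_eq_one (f := fun R z ↦ f R (‖p‖ * z))
    (hf.comp (f := fun q : ℝ × ℝ ↦ (q.1, ‖p‖ * q.2)) (by fun_prop)) he

theorem setLIntegral_ball_fun_norm_inner {f : ℝ → ℝ → ℝ≥0∞}
    (hf : Measurable (Function.uncurry f)) (p : E) (L : ℝ) :
    ∫⁻ y in ball (0 : E) L, f ‖y‖ (inner ℝ p y) = ENNReal.ofReal (2 * π) *
      ∫⁻ R in Ioo 0 L, ENNReal.ofReal (R ^ 2) * ∫⁻ t in Ioo (-1) 1, f R (‖p‖ * (R * t)) := by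
  let below : Set (ℝ × ℝ) := Prod.fst ⁻¹' Iio L
  have htrunc : Measurable (below.indicator (Function.uncurry f)) :=
    hf.indicator (measurable_fst measurableSet_Iio)
  calc
    ∫⁻ y in ball (0 : E) L, f ‖y‖ (inner ℝ p y)
      = ∫⁻ y : E, below.indicator (Function.uncurry f) (‖y‖, inner ℝ p y) := by
        rw [← lintegral_indicator measurableSet_ball]
        simp [indicator, below]
    _ = ENNReal.ofReal (2 * π) * ∫⁻ R in Ioi 0, ENNReal.ofReal (R ^ 2) *
          ∫⁻ t in Ioo (-1) 1, below.indicator (Function.uncurry f) (R, ‖p‖ * (R * t)) :=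
        lintegral_fun_norm_inner (f := Function.curry (below.indicator (Function.uncurry f)))
          htrunc p
    _ = ENNReal.ofReal (2 * π) * ∫⁻ R in Ioi 0, (Iio L).indicator (fun R ↦
          ENNReal.ofReal (R ^ 2) * ∫⁻ t in Ioo (-1) 1, f R (‖p‖ * (R * t))) R := by
        congr 2 with R
        by_cases hR : R < L <;> simp [indicator, below, hR]
    _ = _ := by rw [setLIntegral_indicator measurableSet_Iio, Iio_inter_Ioi]

theorem setLIntegral_ball_fun_norm {g : ℝ → ℝ≥0∞} (hg : Measurable g) (L : ℝ) :
    ∫⁻ y in ball (0 : E) L, g ‖y‖ =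
      ENNReal.ofReal (4 * π) * ∫⁻ R in Ioo 0 L, ENNReal.ofReal (R ^ 2) * g R := by
  rw [setLIntegral_ball_fun_norm_inner (f := fun R _ ↦ g R) (hg.comp measurable_fst) 0 L]
  have hlength : volume (Ioo (-1 : ℝ) 1) = 2 := by norm_num
  have hconst : 4 * π = 2 * π * 2 := by ring
  simp only [setLIntegral_const, hlength, ← mul_assoc (ENNReal.ofReal (_ ^ 2)), hconst]
  rw [lintegral_mul_const _ (by fun_prop), ENNReal.ofReal_mul (by positivity) (p := 2 * π),
    ENNReal.ofReal_ofNat]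
  ring

end Spherical

section Deformation

variable {E : Type*} [NormedAddCommGroup E] [NormedSpace ℝ E]

/-- The radial deformation `u(x) = r(‖x‖) x / ‖x‖`; division by zero makes it vanish at `0`. -/
noncomputable def radialDeformation (r : ℝ → ℝ) (x : E) : E := (r ‖x‖ / ‖x‖) • x

theorem norm_radialDeformation {r : ℝ → ℝ} {x : E} (hx : x ≠ 0) (hr : 0 ≤ r ‖x‖) :
    ‖radialDeformation r x‖ = r ‖x‖ := by
  rw [radialDeformation, norm_smul, norm_div, norm_norm, norm_of_nonneg hr,
    div_mul_cancel₀ _ (norm_ne_zero_iff.2 hx)]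

end Deformation

section Potential

variable {E : Type*} [NormedAddCommGroup E] [InnerProductSpace ℝ E]

-- `r ‖y‖ / ‖y‖ * ‖y‖` stays uncancelled so that the formula also holds at `y = 0`.
theorem norm_sub_radialDeformation (r : ℝ → ℝ) (p y : E) :
    ‖p - radialDeformation r y‖ =
      √(‖p‖ ^ 2 + (r ‖y‖ / ‖y‖ * ‖y‖) ^ 2 - 2 * (r ‖y‖ / ‖y‖) * inner ℝ p y) := by
  rw [← sqrt_sq (norm_nonneg (p - radialDeformation r y)), norm_sub_sq_real, radialDeformation,
    real_inner_smul_right, norm_smul, mul_pow, norm_eq_abs, sq_abs]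
  ring_nf

variable [FiniteDimensional ℝ E] [MeasurableSpace E] [BorelSpace E] [Fact (finrank ℝ E = 3)]

theorem setLIntegral_ball_div_norm_sub_radialDeformation {σ r : ℝ → ℝ} (hσ : Measurable σ)
    (hr : Measurable r) {L : ℝ} (hrpos : ∀ R ∈ Ioo 0 L, 0 < r R) (p : E) :
    ∫⁻ y in ball (0 : E) L, ENNReal.ofReal (σ ‖y‖ / ‖p - radialDeformation r y‖) =
      ENNReal.ofReal (4 * π) *
        ∫⁻ S in Ioo 0 L, ENNReal.ofReal (S ^ 2 * (σ S / max ‖p‖ (r S))) := by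
  simp only [norm_sub_radialDeformation]
  rw [setLIntegral_ball_fun_norm_inner (f := fun S z ↦ ENNReal.ofReal
    (σ S / √(‖p‖ ^ 2 + (r S / S * S) ^ 2 - 2 * (r S / S) * z))) (by fun_prop)]
  have hshell (S : ℝ) (hS : S ∈ Ioo 0 L) : ∫⁻ t in Ioo (-1) 1, ENNReal.ofReal
      (σ S / √(‖p‖ ^ 2 + (r S / S * S) ^ 2 - 2 * (r S / S) * (‖p‖ * (S * t)))) =
      ENNReal.ofReal (2 * (σ S / max ‖p‖ (r S))) := by
    have hquad (t : ℝ) : ‖p‖ ^ 2 + (r S / S * S) ^ 2 - 2 * (r S / S) * (‖p‖ * (S * t)) =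
        ‖p‖ ^ 2 + r S ^ 2 - 2 * ‖p‖ * r S * t := by
      have := hS.1.ne'
      field_simp
    simp only [hquad, div_eq_mul_inv (σ S) √_]
    simp only [ENNReal.ofReal_mul' (inv_nonneg.2 (sqrt_nonneg _))]
    rw [lintegral_const_mul' _ _ ENNReal.ofReal_ne_top,
      lintegral_inv_sqrt_sq_add_sq_sub (norm_nonneg p) (hrpos S hS),
      ← ENNReal.ofReal_mul' (by positivity)]
    congr 1
    ring
  have hconst : 4 * π = 2 * π * 2 := by ring
  calc
    _ = ENNReal.ofReal (2 * π) * ∫⁻ S in Ioo 0 L,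
          ENNReal.ofReal 2 * ENNReal.ofReal (S ^ 2 * (σ S / max ‖p‖ (r S))) := by
        congr 1
        refine setLIntegral_congr_fun measurableSet_Ioo fun S hS ↦ ?_
        rw [hshell S hS, ← ENNReal.ofReal_mul (sq_nonneg S), ← ENNReal.ofReal_mul zero_le_two,
          mul_left_comm]
    _ = _ := by
        rw [lintegral_const_mul' _ _ ENNReal.ofReal_ne_top, hconst,
          ENNReal.ofReal_mul (by positivity) (p := 2 * π), mul_assoc]

/-- The Coulomb interaction density of the deformed shells of radii `R` and `S`, up to the factor
`(4π)²` from the areas of the two unit spheres. -/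
noncomputable def shellInteraction (ρ r : ℝ → ℝ) (R S : ℝ) : ℝ :=
  R ^ 2 * (S ^ 2 * (ρ R * ρ S / max (r R) (r S)))

theorem shellInteraction_comm (ρ r : ℝ → ℝ) (R S : ℝ) :
    shellInteraction ρ r R S = shellInteraction ρ r S R := by
  simp only [shellInteraction, mul_left_comm (R ^ 2), mul_comm (ρ R), max_comm (r R)]

theorem measurable_shellInteraction {ρ r : ℝ → ℝ} (hρ : Measurable ρ) (hr : Measurable r) :
    Measurable (Function.uncurry (shellInteraction ρ r)) := by
  unfold shellInteraction Function.uncurry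
  fun_prop

theorem lintegral_lintegral_ball_div_norm_sub_radialDeformation {ρ r : ℝ → ℝ} (hρ : Measurable ρ)
    (hr : Measurable r) {L : ℝ} (hrpos : ∀ R ∈ Ioo 0 L, 0 < r R) :
    ∫⁻ x in ball (0 : E) L, ∫⁻ y in ball (0 : E) L,
        ENNReal.ofReal (ρ ‖x‖ * ρ ‖y‖ / ‖radialDeformation r x - radialDeformation r y‖) =
      ENNReal.ofReal (4 * π) * ∫⁻ R in Ioo 0 L,
        ENNReal.ofReal (4 * π) * ∫⁻ S in Ioo 0 L, ENNReal.ofReal (shellInteraction ρ r R S) := by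
  have : Nontrivial E := nontrivial_of_finrank_eq_succ (Fact.out : finrank ℝ E = 2 + 1)
  have hshells : Measurable fun R ↦ ENNReal.ofReal (4 * π) *
      ∫⁻ S in Ioo 0 L, ENNReal.ofReal (S ^ 2 * (ρ R * ρ S / max (r R) (r S))) :=
    (Measurable.lintegral_prod_right' (f := fun q : ℝ × ℝ ↦
      ENNReal.ofReal (q.2 ^ 2 * (ρ q.1 * ρ q.2 / max (r q.1) (r q.2)))) (by fun_prop)).const_mul _
  calc
    _ = ∫⁻ x in ball (0 : E) L, ENNReal.ofReal (4 * π) *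
          ∫⁻ S in Ioo 0 L, ENNReal.ofReal (S ^ 2 * (ρ ‖x‖ * ρ S / max (r ‖x‖) (r S))) := by
        refine setLIntegral_congr_fun_ae measurableSet_ball ?_
        filter_upwards [Measure.ae_ne volume (0 : E)] with x hx hxL
        have hxL' : ‖x‖ ∈ Ioo 0 L := ⟨norm_pos_iff.2 hx, mem_ball_zero_iff.1 hxL⟩
        rw [setLIntegral_ball_div_norm_sub_radialDeformation (hρ.const_mul _) hr hrpos,
          norm_radialDeformation hx (hrpos _ hxL').le]
    _ = _ := by
        rw [setLIntegral_ball_fun_norm hshells]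
        refine congrArg _ (lintegral_congr fun R ↦ ?_)
        rw [mul_left_comm, ← lintegral_const_mul' _ _ ENNReal.ofReal_ne_top]
        simp only [shellInteraction, ENNReal.ofReal_mul (sq_nonneg R)]

theorem lintegral_shellInteraction_Ioo {ρ r : ℝ → ℝ} {R : ℝ} (hR : 0 ≤ R)
    (hρ : ∀ S ∈ Ioo 0 R, 0 ≤ ρ S) (hρR : 0 ≤ ρ R) (hrR : 0 ≤ r R) (hr : ∀ S ∈ Ioo 0 R, r S ≤ r R)
    (hmass : IntervalIntegrable (fun u ↦ ρ u * u ^ 2) volume 0 R) :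
    ENNReal.ofReal (4 * π) * ∫⁻ S in Ioo 0 R, ENNReal.ofReal (shellInteraction ρ r R S) =
      ENNReal.ofReal (ρ R * Mfun ρ R * (r R)⁻¹ * R ^ 2) := by
  have hfactor (S : ℝ) (hS : S ∈ Ioo 0 R) : ENNReal.ofReal (shellInteraction ρ r R S) =
      ENNReal.ofReal (ρ R * (r R)⁻¹ * R ^ 2) * ENNReal.ofReal (ρ S * S ^ 2) := by
    rw [shellInteraction, max_eq_left (hr S hS), ← ENNReal.ofReal_mul (by positivity)]
    congr 1
    ring
  have hint : IntegrableOn (fun u ↦ ρ u * u ^ 2) (Ioo 0 R) :=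
    (intervalIntegrable_iff_integrableOn_Ioo_of_le hR).1 hmass
  rw [setLIntegral_congr_fun measurableSet_Ioo hfactor,
    lintegral_const_mul' _ _ ENNReal.ofReal_ne_top, ← ofReal_integral_eq_lintegral_ofReal hint
      (ae_restrict_of_forall_mem measurableSet_Ioo fun S hS ↦ mul_nonneg (hρ S hS) (sq_nonneg S)),
    ← integral_Ioc_eq_integral_Ioo, ← intervalIntegral.integral_of_le hR,
    ← ENNReal.ofReal_mul (by positivity), ← ENNReal.ofReal_mul (by positivity), Mfun]
  congr 1
  ring

theorem stmt18_general {ρ0 r : ℝ → ℝ} {L : ℝ} (hρmeas : Measurable ρ0)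
    (hρ : ∀ R ∈ Ioo 0 L, 0 ≤ ρ0 R)
    (hmass : ∀ R ∈ Ioo 0 L, IntervalIntegrable (fun u ↦ ρ0 u * u ^ 2) volume 0 R)
    (hrmeas : Measurable r) (hrpos : ∀ R ∈ Ioo 0 L, 0 < r R) (hrmono : MonotoneOn r (Ioo 0 L)) :
    (1 / 2 : ℝ≥0∞) * ∫⁻ x in ball (0 : E) L, ∫⁻ y in ball (0 : E) L,
        ENNReal.ofReal (ρ0 ‖x‖ * ρ0 ‖y‖ / ‖radialDeformation r x - radialDeformation r y‖) =
      ENNReal.ofReal (4 * π) *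
        ∫⁻ R in Ioo 0 L, ENNReal.ofReal (ρ0 R * Mfun ρ0 R * (r R)⁻¹ * R ^ 2) := by
  have hinner (R : ℝ) (hR : R ∈ Ioo 0 L) : ENNReal.ofReal (4 * π) *
      ∫⁻ S in Iio R, ENNReal.ofReal (shellInteraction ρ0 r R S) ∂volume.restrict (Ioo 0 L) =
        ENNReal.ofReal (ρ0 R * Mfun ρ0 R * (r R)⁻¹ * R ^ 2) := by
    have hsub : Ioo 0 R ⊆ Ioo 0 L := Ioo_subset_Ioo_right hR.2.le
    rw [Measure.restrict_restrict measurableSet_Iio, Iio_inter_Ioo, min_eq_left hR.2.le,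
      lintegral_shellInteraction_Ioo hR.1.le (fun S hS ↦ hρ S (hsub hS)) (hρ R hR) (hrpos R hR).le
        (fun S hS ↦ hrmono (hsub hS) hR hS.2.le) (hmass R hR)]
  rw [lintegral_lintegral_ball_div_norm_sub_radialDeformation hρmeas hrmeas hrpos,
    lintegral_const_mul' _ _ ENNReal.ofReal_ne_top,
    lintegral_lintegral_eq_two_mul_of_symm
      (measurable_shellInteraction hρmeas hrmeas).ennreal_ofReal
      fun R S ↦ congrArg ENNReal.ofReal (shellInteraction_comm ρ0 r R S),
    ← setLIntegral_congr_fun measurableSet_Ioo hinner,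
    lintegral_const_mul' _ _ ENNReal.ofReal_ne_top]
  have hhalf : (1 / 2 : ℝ≥0∞) * 2 = 1 := ENNReal.div_mul_cancel two_ne_zero ENNReal.ofNat_ne_top
  rw [mul_left_comm _ 2, mul_left_comm _ 2, ← mul_assoc (1 / 2), hhalf, one_mul]

end Potential

theorem stmt18 (ρ0 : ℝ → ℝ) (hρmeas : Measurable ρ0) (k1 : ℝ)
    (hρ : ∀ R ∈ Icc (0:ℝ) 1, 0 ≤ ρ0 R ∧ ρ0 R ≤ k1)
    (r : ℝ → ℝ) (hrmeas : Measurable r)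
    (hrpos : ∀ R ∈ Ioc (0:ℝ) 1, 0 < r R) (hrmono : MonotoneOn r (Ioc (0:ℝ) 1)) :
    (1/2 : ℝ≥0∞) *
        ∫⁻ x in Metric.ball (0 : EuclideanSpace ℝ (Fin 3)) 1,
          ∫⁻ y in Metric.ball (0 : EuclideanSpace ℝ (Fin 3)) 1,
            ENNReal.ofReal (ρ0 ‖x‖ * ρ0 ‖y‖ /
              ‖(r ‖x‖ / ‖x‖) • x - (r ‖y‖ / ‖y‖) • y‖) =
      ENNReal.ofReal (4 * π) *
        ∫⁻ R in Ioo (0:ℝ) 1, ENNReal.ofReal (ρ0 R * Mfun ρ0 R * (r R)⁻¹ * R ^ 2) := by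
  have : Fact (finrank ℝ (EuclideanSpace ℝ (Fin 3)) = 3) := ⟨finrank_euclideanSpace_fin⟩
  have hmass (R : ℝ) (hR : R ∈ Ioo 0 1) : IntervalIntegrable (fun u ↦ ρ0 u * u ^ 2) volume 0 R :=
    (intervalIntegrable_of_mem_Icc hρmeas.aemeasurable fun u hu ↦ hρ u (uIcc_subset_Icc
      (left_mem_Icc.2 zero_le_one) (Ioo_subset_Icc_self hR) hu)).mul_continuousOn (by fun_prop)
  exact stmt18_general hρmeas (fun R hR ↦ (hρ R (Ioo_subset_Icc_self hR)).1) hmass hrmeas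
    (fun R hR ↦ hrpos R (Ioo_subset_Ioc_self hR)) (hrmono.mono Ioo_subset_Ioc_self)
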